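/- Let T be a tree with at least three vertices. Then Ψ(L(T)) = σ(T) − ex'(T), where Ψ(L(T)) is the minimum cardinality of a doubly resolving set of the line graph L(T), σ(T) is the number of leaves of T, and ex'(T) is the number of strong exterior major vertices of T. -/

import Mathlib

open SimpleGraph

variable {V : Type*}

/-- `S` is a doubly resolving set of `G`: every pair of distinct vertices is doubly
resolved by some pair of vertices of `S`. -/
def IsDoublyResolvingSet (G : SimpleGraph V) (S : Set V) : Prop :=
  ∀ u v : V, u ≠ v → ∃ x ∈ S, ∃ y ∈ S,
    (G.dist u x : ℤ) - (G.dist u y : ℤ) ≠ (G.dist v x : ℤ) - (G.dist v y : ℤ)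

/-- `Ψ(G)`: the minimum cardinality of a doubly resolving set of `G`. -/
noncomputable def psi (G : SimpleGraph V) : ℕ :=
  sInf {n | ∃ S : Set V, IsDoublyResolvingSet G S ∧ S.ncard = n}

/-- The degree of a vertex, as the cardinality of its neighbor set. -/
noncomputable def deg (G : SimpleGraph V) (v : V) : ℕ := (G.neighborSet v).ncard

/-- The maximum degree `Δ(G)`. -/
noncomputable def maxDeg (G : SimpleGraph V) : ℕ := sSup (Set.range (deg G))

/-!
Call a set `K` of leaves *ample* if a leaf outside `K` always hangs at a vertex of degree at least
three and no vertex carries two leaves outside `K`. The smallest ample sets have `σ - ex'` elements,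
and ample sets correspond to doubly resolving sets of the line graph.

If `S` doubly resolves `L(G)`, the leaves whose edge lies in `S` form an ample set: the edges of two
leaves at the same vertex are twins in `L(G)`, and the edge of a leaf at a vertex of degree two is a
leaf of `L(G)`.

Conversely, let `K` be ample in a finite tree. A branch hanging off an edge contains an element of
`K` unless it is a single leaf outside `K`. Any two edges `e ≠ f` are separated by an edge `uv` with
an element of `K` on either side, and the edges at two such leaves doubly resolve `e` and `f`: in
terms of the distance from an edge to a leaf of the tree, moving the leaf from the side of `f` to
that of `e` favours `e` strictly.
-/

lemma ncard_le_ncard_of_forall_subsingleton {α β : Type*} {s : Set α} {t : Set β}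
    (r : α → β → Prop) (ht : t.Finite) (hs : ∀ a ∈ s, ∃ b ∈ t, r a b)
    (hr : ∀ b ∈ t, {a ∈ s | r a b}.Subsingleton) : s.ncard ≤ t.ncard := by
  obtain rfl | ⟨a, ha⟩ := s.eq_empty_or_nonempty
  · simp
  have : Nonempty β := ⟨(hs a ha).choose⟩
  choose! f hft hf using hs
  refine Set.ncard_le_ncard_of_injOn f hft (fun a ha b hb hab => ?_) ht
  exact hr _ (hft a ha) ⟨ha, hf a ha⟩ ⟨hb, hab ▸ hf b hb⟩

lemma exists_mem_ne_ne_of_three_le_ncard {α : Type*} {s : Set α} (hs : 3 ≤ s.ncard) (x y : α) :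
    ∃ m ∈ s, m ≠ x ∧ m ≠ y := by
  have hlt : ({x, y} : Set α).ncard < s.ncard :=
    (Set.ncard_insert_le x {y}).trans_lt (by rwa [Set.ncard_singleton])
  simpa only [Set.mem_insert_iff, Set.mem_singleton_iff, not_or] using
    Set.exists_mem_notMem_of_ncard_lt_ncard hlt

variable {G T : SimpleGraph V}

/-! ### Distances -/

lemma dist_le_dist_add_one_of_adj {u v : V} (h : G.Adj u v) (x : V) :
    G.dist u x ≤ G.dist v x + 1 := by
  have := h.reachable.dist_triangle_left x
  rwa [dist_eq_one_iff_adj.mpr h, add_comm] at this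

lemma exists_adj_dist_add_one_eq {u v : V} (h : G.Reachable u v) (hne : u ≠ v) :
    ∃ w, G.Adj u w ∧ G.dist w v + 1 = G.dist u v := by
  obtain ⟨p, hp⟩ := h.exists_walk_length_eq_dist
  cases p with
  | nil => exact absurd rfl hne
  | @cons _ w _ huw q =>
    refine ⟨w, huw, le_antisymm ?_ ?_⟩
    · simpa only [← hp, Walk.length_cons, add_le_add_iff_right] using dist_le q
    · exact dist_le_dist_add_one_of_adj huw v

lemma eq_of_adj_of_dist_add_one_eq (hG : G.IsAcyclic) {r a b c : V} (hab : G.Adj a b)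
    (hac : G.Adj a c) (hb : G.dist b r + 1 = G.dist a r) (hc : G.dist c r + 1 = G.dist a r) :
    b = c := by
  have har : G.Reachable a r := Reachable.of_dist_ne_zero (by omega)
  obtain ⟨p, hp⟩ := (hab.symm.reachable.trans har).exists_walk_length_eq_dist
  obtain ⟨q, hq⟩ := (hac.symm.reachable.trans har).exists_walk_length_eq_dist
  have hp' := (Walk.cons hab p).isPath_of_length_eq_dist (by rw [Walk.length_cons, hp, hb])
  have hq' := (Walk.cons hac q).isPath_of_length_eq_dist (by rw [Walk.length_cons, hq, hc])
  have hpq := (hG.subsingleton_path a r).elim ⟨_, hp'⟩ ⟨_, hq'⟩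
  simp only [Subtype.mk.injEq, Walk.cons.injEq] at hpq
  exact hpq.1

lemma dist_eq_dist_add_one_of_adj_of_ne (hT : T.IsTree) {r a b c : V} (hab : T.Adj a b)
    (hac : T.Adj a c) (hbc : b ≠ c) (hb : T.dist b r + 1 = T.dist a r) :
    T.dist c r = T.dist a r + 1 := by
  rcases hT.dist_eq_dist_add_one_of_adj r hac with h | h
  · rw [T.dist_comm, T.dist_comm (u := r)] at h
    exact absurd (eq_of_adj_of_dist_add_one_eq hT.isAcyclic hab hac hb h.symm) hbc
  · rwa [T.dist_comm, T.dist_comm (u := r)] at h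

/-! ### Leaves -/

lemma adj_unique_of_deg_eq_one {l p q : V} (hl : deg G l = 1) (hp : G.Adj l p) (hq : G.Adj l q) :
    p = q := by
  obtain ⟨a, ha⟩ := Set.ncard_eq_one.mp hl
  exact Set.subsingleton_singleton (ha ▸ hp : p ∈ ({a} : Set V)) (ha ▸ hq)

lemma exists_adj_of_deg_eq_one {l : V} (hl : deg G l = 1) : ∃ p, G.Adj l p :=
  Set.nonempty_of_ncard_ne_zero (s := G.neighborSet l) (hl.trans_ne one_ne_zero)

lemma not_adj_of_deg_eq_one (hG : G.Connected) (hcard : 3 ≤ ENat.card V) {l k : V}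
    (hl : deg G l = 1) (hk : deg G k = 1) : ¬ G.Adj l k := by
  intro hlk
  obtain ⟨w, hwl, hwk⟩ := ENat.exists_ne_ne_of_three_le hcard l k
  obtain ⟨a, hla, ha⟩ := exists_adj_dist_add_one_eq (hG l w) hwl.symm
  obtain ⟨b, hkb, hb⟩ := exists_adj_dist_add_one_eq (hG k w) hwk.symm
  obtain rfl := adj_unique_of_deg_eq_one hl hlk hla
  obtain rfl := adj_unique_of_deg_eq_one hk hlk.symm hkb
  omega

/-! ### Edges and distances in the line graph -/

lemma exists_adj_eq_mk_of_mem {e : G.edgeSet} {u : V} (hu : u ∈ e.1) :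
    ∃ v, ∃ h : G.Adj u v, e = ⟨s(u, v), h⟩ := by
  obtain ⟨v, hv⟩ := Sym2.mem_iff_exists.mp hu
  exact ⟨v, (hv ▸ e.2 : s(u, v) ∈ G.edgeSet), Subtype.ext hv⟩

lemma exists_mem_ne (e : G.edgeSet) (u : V) : ∃ w ∈ e.1, w ≠ u := by
  obtain ⟨⟨a, b⟩, hab : G.Adj a b⟩ := e
  rcases eq_or_ne a u with rfl | hau
  · exact ⟨b, Sym2.mem_mk_right a b, hab.ne'⟩
  · exact ⟨a, Sym2.mem_mk_left a b, hau⟩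

lemma dist_le_one_of_mem {e : G.edgeSet} {u v : V} (hu : u ∈ e.1) (hv : v ∈ e.1) :
    G.dist u v ≤ 1 := by
  obtain ⟨w, huw, rfl⟩ := exists_adj_eq_mk_of_mem hu
  rcases Sym2.mem_iff.mp hv with rfl | rfl
  · simp
  · exact (dist_eq_one_iff_adj.mpr huw).le

lemma edge_unique_of_deg_eq_one {l : V} {x y : G.edgeSet} (hl : deg G l = 1) (hx : l ∈ x.1)
    (hy : l ∈ y.1) : x = y := by
  obtain ⟨p, hlp, rfl⟩ := exists_adj_eq_mk_of_mem hx
  obtain ⟨q, hlq, rfl⟩ := exists_adj_eq_mk_of_mem hy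
  obtain rfl := adj_unique_of_deg_eq_one hl hlp hlq
  rfl

lemma exists_lineGraph_walk_length_le {u v : V} (p : G.Walk u v) {e f : G.edgeSet} (hu : u ∈ e.1)
    (hv : v ∈ f.1) : ∃ q : G.lineGraph.Walk e f, q.length ≤ p.length + 1 := by
  induction p generalizing e with
  | nil =>
    rcases eq_or_ne e f with rfl | hef
    · exact ⟨.nil, Nat.zero_le _⟩
    · exact ⟨(lineGraph_adj_iff_exists.mpr ⟨hef, _, hu, hv⟩).toWalk, le_rfl⟩
  | @cons a b _ hab p ih =>
    obtain ⟨q, hq⟩ := ih (e := ⟨s(a, b), hab⟩) (Sym2.mem_mk_right a b) hv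
    rcases eq_or_ne e ⟨s(a, b), hab⟩ with rfl | he
    · exact ⟨q, hq.trans (by simp)⟩
    · exact ⟨.cons (lineGraph_adj_iff_exists.mpr ⟨he, a, hu, Sym2.mem_mk_left a b⟩) q, by simpa⟩

lemma lineGraph_preconnected (hG : G.Preconnected) : G.lineGraph.Preconnected := by
  rintro ⟨⟨a, b⟩, he⟩ ⟨⟨c, d⟩, hf⟩
  obtain ⟨p⟩ := hG a c
  obtain ⟨q, -⟩ := exists_lineGraph_walk_length_le p (e := ⟨s(a, b), he⟩) (f := ⟨s(c, d), hf⟩)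
    (Sym2.mem_mk_left a b) (Sym2.mem_mk_left c d)
  exact q.reachable

lemma lineGraph_dist_le_dist_add_one {u v : V} {e f : G.edgeSet} (huv : G.Reachable u v)
    (hu : u ∈ e.1) (hv : v ∈ f.1) : G.lineGraph.dist e f ≤ G.dist u v + 1 := by
  obtain ⟨p, hp⟩ := huv.exists_walk_length_eq_dist
  obtain ⟨q, hq⟩ := exists_lineGraph_walk_length_le p hu hv
  exact (dist_le q).trans (hp ▸ hq)

lemma exists_mem_dist_le_length (hG : G.Connected) {e f : G.edgeSet} (q : G.lineGraph.Walk e f)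
    {v : V} (hv : v ∈ f.1) : ∃ w ∈ e.1, G.dist w v ≤ q.length := by
  induction q with
  | nil => exact ⟨v, hv, by simp⟩
  | cons hadj q ih =>
    obtain ⟨w', hw', hdist⟩ := ih hv
    obtain ⟨-, w, hwe, hwf⟩ := lineGraph_adj_iff_exists.mp hadj
    refine ⟨w, hwe, ?_⟩
    calc G.dist w v ≤ G.dist w w' + G.dist w' v := hG.dist_triangle
      _ ≤ 1 + q.length := add_le_add (dist_le_one_of_mem hwf hw') hdist
      _ = (Walk.cons hadj q).length := by rw [Walk.length_cons, add_comm]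

lemma exists_mem_dist_le_lineGraph_dist (hG : G.Connected) (e : G.edgeSet) {f : G.edgeSet} {v : V}
    (hv : v ∈ f.1) : ∃ w ∈ e.1, G.dist w v ≤ G.lineGraph.dist e f := by
  obtain ⟨q, hq⟩ :=
    (lineGraph_preconnected hG.preconnected e f).exists_walk_length_eq_dist
  exact hq ▸ exists_mem_dist_le_length hG q hv

lemma lineGraph_dist_le_dist_of_deg_eq_one (hG : G.Connected) {e x : G.edgeSet} {u l : V}
    (hl : deg G l = 1) (hu : u ∈ e.1) (hx : l ∈ x.1) : G.lineGraph.dist e x ≤ G.dist u l := by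
  rcases eq_or_ne l u with rfl | hlu
  · simp [edge_unique_of_deg_eq_one hl hu hx]
  obtain ⟨p, hlp, hp⟩ := exists_adj_dist_add_one_eq (hG l u) hlu
  obtain rfl := edge_unique_of_deg_eq_one (y := ⟨s(l, p), hlp⟩) hl hx (Sym2.mem_mk_left l p)
  have := lineGraph_dist_le_dist_add_one (f := ⟨s(l, p), hlp⟩) (hG u p) hu
    (Sym2.mem_mk_right l p)
  rwa [G.dist_comm, hp, G.dist_comm] at this

lemma lineGraph_adj_mk_iff_of_deg_eq_one {l p : V} (hl : deg G l = 1) (hlp : G.Adj l p)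
    {f : G.edgeSet} : G.lineGraph.Adj ⟨s(l, p), hlp⟩ f ↔ ⟨s(l, p), hlp⟩ ≠ f ∧ p ∈ f.1 := by
  rw [lineGraph_adj_iff_exists]
  refine and_congr_right fun hne => ⟨?_, fun hp => ⟨p, Sym2.mem_mk_right l p, hp⟩⟩
  rintro ⟨w, hw, hwf⟩
  rcases Sym2.mem_iff.mp hw with rfl | rfl
  · exact absurd (edge_unique_of_deg_eq_one hl hw hwf) hne
  · exact hwf

/-! ### Vertices forced into a doubly resolving set -/

lemma dist_add_one_eq_of_neighborSet_eq_singleton (hG : G.Preconnected) {u v x : V}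
    (hu : G.neighborSet u = {v}) (hux : u ≠ x) : G.dist v x + 1 = G.dist u x := by
  obtain ⟨w, huw, hw⟩ := exists_adj_dist_add_one_eq (hG u x) hux
  obtain rfl : w = v := hu.subset huw
  exact hw

lemma dist_le_dist_of_adj_imp (hG : G.Preconnected) {u v x : V}
    (h : ∀ w, w ≠ u → G.Adj v w → G.Adj u w) (hvx : v ≠ x) : G.dist u x ≤ G.dist v x := by
  obtain ⟨w, hvw, hw⟩ := exists_adj_dist_add_one_eq (hG v x) hvx
  rcases eq_or_ne w u with rfl | hwu
  · omega
  · exact (dist_le_dist_add_one_of_adj (h w hwu hvw) x).trans hw.le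

namespace IsDoublyResolvingSet

variable {S : Set V}

lemma mem_of_neighborSet_eq_singleton (hS : IsDoublyResolvingSet G S) (hG : G.Preconnected)
    {u v : V} (hu : G.neighborSet u = {v}) : u ∈ S := by
  by_contra huS
  have hdist (x : V) (hx : x ∈ S) : G.dist v x + 1 = G.dist u x :=
    dist_add_one_eq_of_neighborSet_eq_singleton hG hu fun h => huS (h ▸ hx)
  have huv : G.Adj u v := hu.superset rfl
  obtain ⟨x, hx, y, hy, hxy⟩ := hS u v huv.ne
  have := hdist x hx
  have := hdist y hy
  omega

lemma mem_or_mem_of_twins (hS : IsDoublyResolvingSet G S) (hG : G.Preconnected) {u v : V}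
    (huv : u ≠ v) (h : ∀ w, w ≠ u → w ≠ v → (G.Adj u w ↔ G.Adj v w)) : u ∈ S ∨ v ∈ S := by
  by_contra! ⟨huS, hvS⟩
  have hdist (x : V) (hx : x ∈ S) : G.dist u x = G.dist v x :=
    le_antisymm
      (dist_le_dist_of_adj_imp hG (fun w hwu hvw => (h w hwu hvw.ne').mpr hvw)
        fun h => hvS (h ▸ hx))
      (dist_le_dist_of_adj_imp hG (fun w hwv huw => (h w huw.ne' hwv).mp huw)
        fun h => huS (h ▸ hx))
  obtain ⟨x, hx, y, hy, hxy⟩ := hS u v huv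
  exact hxy (by rw [hdist x hx, hdist y hy])

end IsDoublyResolvingSet

/-! ### Ample sets of leaves -/

/-- A set of leaves of `G` is ample if it omits at most one leaf at each vertex of degree at least
three, and no leaf at any other vertex. These are the sets of leaves whose edges doubly resolve the
line graph of a tree. -/
structure IsAmpleLeafSet (G : SimpleGraph V) (K : Set V) : Prop where
  deg_eq_one : ∀ ⦃l⦄, l ∈ K → deg G l = 1
  three_le_deg : ∀ ⦃l p⦄, deg G l = 1 → l ∉ K → G.Adj l p → 3 ≤ deg G p
  eq_of_adj : ∀ ⦃l k p⦄, deg G l = 1 → l ∉ K → deg G k = 1 → k ∉ K → G.Adj l p → G.Adj k p → l = k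

lemma IsAmpleLeafSet.ncard_sub_ncard_le [Finite V] {K : Set V} (hK : IsAmpleLeafSet G K) :
    {v : V | deg G v = 1}.ncard - {v : V | 3 ≤ deg G v ∧ ∃ w, G.Adj v w ∧ deg G w = 1}.ncard ≤
      K.ncard := by
  have homitted : ({v : V | deg G v = 1} \ K).ncard ≤
      {v : V | 3 ≤ deg G v ∧ ∃ w, G.Adj v w ∧ deg G w = 1}.ncard := by
    refine ncard_le_ncard_of_forall_subsingleton G.Adj (Set.toFinite _) ?_ ?_
    · rintro l ⟨hl, hlK⟩
      obtain ⟨p, hlp⟩ := exists_adj_of_deg_eq_one hl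
      exact ⟨p, ⟨hK.three_le_deg hl hlK hlp, l, hlp.symm, hl⟩, hlp⟩
    · rintro p - l ⟨⟨hl, hlK⟩, hlp⟩ k ⟨⟨hk, hkK⟩, hkp⟩
      exact hK.eq_of_adj hl hlK hk hkK hlp hkp
  have := Set.ncard_sdiff_add_ncard_of_subset (s := K) (t := {v : V | deg G v = 1}) hK.deg_eq_one
  omega

lemma exists_isAmpleLeafSet_ncard_eq [Finite V] (G : SimpleGraph V) :
    ∃ K, IsAmpleLeafSet G K ∧ K.ncard = {v : V | deg G v = 1}.ncard -
      {v : V | 3 ≤ deg G v ∧ ∃ w, G.Adj v w ∧ deg G w = 1}.ncard := by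
  set L := {v : V | deg G v = 1}
  set X := {v : V | 3 ≤ deg G v ∧ ∃ w, G.Adj v w ∧ deg G w = 1}
  have hX : ∀ v ∈ X, ∃ w, G.Adj v w ∧ deg G w = 1 := fun v hv => hv.2
  choose! g hadj hleaf using hX
  have hsub : g '' X ⊆ L := Set.image_subset_iff.mpr hleaf
  have hinj : Set.InjOn g X := fun u hu v hv huv =>
    adj_unique_of_deg_eq_one (hleaf u hu) (hadj u hu).symm (huv ▸ (hadj v hv).symm)
  have homitted {l p : V} (hl : deg G l = 1) (hlK : l ∉ L \ g '' X) (hlp : G.Adj l p) :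
      p ∈ X ∧ g p = l := by
    obtain ⟨q, hq, rfl⟩ : l ∈ g '' X := not_not.mp fun h => hlK ⟨hl, h⟩
    obtain rfl := adj_unique_of_deg_eq_one hl hlp (hadj q hq).symm
    exact ⟨hq, rfl⟩
  refine ⟨L \ g '' X, ⟨fun l hl => hl.1, fun l p hl hlK hlp => (homitted hl hlK hlp).1.1, ?_⟩, ?_⟩
  · intro l k p hl hlK hk hkK hlp hkp
    exact (homitted hl hlK hlp).2.symm.trans (homitted hk hkK hkp).2
  · rw [Set.ncard_sdiff hsub, hinj.ncard_image]

/-! ### From doubly resolving sets to ample sets -/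

/-- The leaves of `G` that are an endpoint of some edge in `S`. -/
def incidentLeaves (G : SimpleGraph V) (S : Set G.edgeSet) : Set V :=
  {l | deg G l = 1 ∧ ∃ x ∈ S, l ∈ x.1}

lemma ncard_incidentLeaves_le (hG : G.Connected) (hcard : 3 ≤ ENat.card V)
    {S : Set G.edgeSet} (hS : S.Finite) : (incidentLeaves G S).ncard ≤ S.ncard := by
  refine ncard_le_ncard_of_forall_subsingleton (fun l x => l ∈ x.1) hS
    (fun l hl => hl.2) ?_
  rintro x - l ⟨hl, hlx⟩ k ⟨hk, hkx⟩
  obtain ⟨p, hlp, rfl⟩ := exists_adj_eq_mk_of_mem hlx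
  rcases Sym2.mem_iff.mp hkx with rfl | rfl
  · rfl
  · exact absurd hlp (not_adj_of_deg_eq_one hG hcard hl.1 hk.1)

lemma lineGraph_neighborSet_eq_singleton {l p q : V} (hl : deg G l = 1) (hlp : G.Adj l p)
    (hpq : G.Adj p q) (hlq : l ≠ q) (hp : ∀ w, G.Adj p w → w = l ∨ w = q) :
    G.lineGraph.neighborSet ⟨s(l, p), hlp⟩ = {⟨s(p, q), hpq⟩} := by
  ext f
  rw [mem_neighborSet, lineGraph_adj_mk_iff_of_deg_eq_one hl hlp, Set.mem_singleton_iff]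
  constructor
  · rintro ⟨hne, hpf⟩
    obtain ⟨w, hpw, rfl⟩ := exists_adj_eq_mk_of_mem hpf
    rcases hp w hpw with rfl | rfl
    · exact absurd (Subtype.ext Sym2.eq_swap) hne
    · rfl
  · rintro rfl
    refine ⟨fun h => hlq ?_, Sym2.mem_mk_left p q⟩
    have hs : s(l, p) = s(p, q) := congrArg Subtype.val h
    have hl' : l ∈ s(p, q) := hs ▸ Sym2.mem_mk_left l p
    exact (Sym2.mem_iff.mp hl').resolve_left hlp.ne

lemma mk_mem_of_adj_of_deg_eq_two {S : Set G.edgeSet} (hS : IsDoublyResolvingSet G.lineGraph S)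
    (hG : G.Preconnected) {l p : V} (hl : deg G l = 1) (hlp : G.Adj l p) (hp : deg G p = 2) :
    ⟨s(l, p), hlp⟩ ∈ S := by
  obtain ⟨q, hlq, hN⟩ : ∃ q, l ≠ q ∧ G.neighborSet p = {l, q} := by
    obtain ⟨a, b, hab, hN⟩ := Set.ncard_eq_two.mp hp
    rcases hN.subset hlp.symm with rfl | rfl
    · exact ⟨b, hab, hN⟩
    · exact ⟨a, hab.symm, hN.trans (Set.pair_comm _ _)⟩
  exact hS.mem_of_neighborSet_eq_singleton (lineGraph_preconnected hG)
    (lineGraph_neighborSet_eq_singleton hl hlp (hN.superset (Or.inr rfl)) hlq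
      fun w hw => hN.subset hw)

lemma mk_mem_or_mk_mem_of_adj {S : Set G.edgeSet} (hS : IsDoublyResolvingSet G.lineGraph S)
    (hG : G.Preconnected) {l k p : V} (hl : deg G l = 1) (hk : deg G k = 1) (hlp : G.Adj l p)
    (hkp : G.Adj k p) (hlk : l ≠ k) : ⟨s(l, p), hlp⟩ ∈ S ∨ ⟨s(k, p), hkp⟩ ∈ S := by
  refine hS.mem_or_mem_of_twins (lineGraph_preconnected hG)
    (fun h => hlk (Sym2.congr_left.mp (congrArg Subtype.val h))) fun w hwl hwk => ?_
  rw [lineGraph_adj_mk_iff_of_deg_eq_one hl, lineGraph_adj_mk_iff_of_deg_eq_one hk,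
    and_iff_right hwl.symm, and_iff_right hwk.symm]

lemma isAmpleLeafSet_incidentLeaves [Finite V] (hG : G.Connected) (hcard : 3 ≤ ENat.card V)
    {S : Set G.edgeSet} (hS : IsDoublyResolvingSet G.lineGraph S) :
    IsAmpleLeafSet G (incidentLeaves G S) where
  deg_eq_one l hl := hl.1
  three_le_deg l p hl hlS hlp := by
    have hp_zero : deg G p ≠ 0 := Set.ncard_ne_zero_of_mem (a := l) hlp.symm
    have hp_one : deg G p ≠ 1 := fun hp => not_adj_of_deg_eq_one hG hcard hl hp hlp
    have hp_two : deg G p ≠ 2 := fun hp =>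
      hlS ⟨hl, _, mk_mem_of_adj_of_deg_eq_two hS hG.preconnected hl hlp hp, Sym2.mem_mk_left l p⟩
    omega
  eq_of_adj l k p hl hlS hk hkS hlp hkp := by
    by_contra hlk
    rcases mk_mem_or_mk_mem_of_adj hS hG.preconnected hl hk hlp hkp hlk with h | h
    · exact hlS ⟨hl, _, h, Sym2.mem_mk_left l p⟩
    · exact hkS ⟨hk, _, h, Sym2.mem_mk_left k p⟩

/-! ### Branches of a tree -/

/-- The side of `u` of the edge `uv` of a tree: the vertices whose path to `v` ends with the step
from `u` to `v`. It is encoded by distances to avoid deleting edges. -/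
def branch (T : SimpleGraph V) (u v : V) : Set V := {x | T.dist x v = T.dist x u + 1}

section Branch

variable {u v x y l : V}

lemma mem_branch_iff : x ∈ branch T u v ↔ T.dist x v = T.dist x u + 1 := Iff.rfl

lemma left_mem_branch (huv : T.Adj u v) : u ∈ branch T u v := by
  simp [branch, dist_eq_one_iff_adj.mpr huv]

lemma ne_right_of_mem_branch (hx : x ∈ branch T u v) : x ≠ v := by
  rintro rfl
  simp [branch] at hx

lemma mem_branch_or_mem_branch (hT : T.IsTree) (huv : T.Adj u v) (x : V) :
    x ∈ branch T u v ∨ x ∈ branch T v u :=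
  hT.dist_eq_dist_add_one_of_adj x huv.symm

lemma mem_branch_of_dist_le (hT : T.IsTree) (huv : T.Adj u v) (h : T.dist x u ≤ T.dist x v) :
    x ∈ branch T u v := by
  refine (mem_branch_or_mem_branch hT huv x).resolve_right fun hx => ?_
  rw [mem_branch_iff] at hx
  omega

lemma mem_branch_of_adj (hT : T.IsTree) (huv : T.Adj u v) (hx : x ∈ branch T u v)
    (hxy : T.Adj x y) (hy : T.dist y v = T.dist x v + 1) : y ∈ branch T u v := by
  refine mem_branch_of_dist_le hT huv ?_
  have := dist_le_dist_add_one_of_adj hxy.symm u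
  rw [mem_branch_iff] at hx
  omega

lemma eq_left_of_mem_branch_of_deg_eq_one (hT : T.Connected) (huv : T.Adj u v) (hu : deg T u = 1)
    (hx : x ∈ branch T u v) : x = u := by
  by_contra hxu
  obtain ⟨w, huw, hw⟩ := exists_adj_dist_add_one_eq (hT u x) (Ne.symm hxu)
  obtain rfl := adj_unique_of_deg_eq_one hu huv huw
  rw [mem_branch_iff, T.dist_comm, T.dist_comm (u := x)] at hx
  omega

lemma deg_ne_one_of_subset_branch (hT : T.Connected) (huv : T.Adj u v) {e : T.edgeSet}
    (he : ∀ w ∈ e.1, w ∈ branch T u v) : deg T u ≠ 1 := fun hu =>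
  have ⟨w, hwe, hwu⟩ := exists_mem_ne e u
  hwu (eq_left_of_mem_branch_of_deg_eq_one hT huv hu (he w hwe))

lemma eq_of_adj_of_mem_branch (hT : T.IsTree) (huv : T.Adj u v) (hx : x ∈ branch T u v)
    (hy : y ∈ branch T v u) (hxy : T.Adj x y) : x = u ∧ y = v := by
  have hxy_u := dist_le_dist_add_one_of_adj hxy u
  have hyx_u := dist_le_dist_add_one_of_adj hxy.symm u
  have hxy_v := dist_le_dist_add_one_of_adj hxy v
  rw [mem_branch_iff] at hx hy
  obtain rfl : x = u := by
    by_contra hxu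
    obtain ⟨w, hxw, hw⟩ := exists_adj_dist_add_one_eq (hT.connected x u) hxu
    have hwv := hT.connected.dist_triangle (u := w) (v := u) (w := v)
    have hxw_v := dist_le_dist_add_one_of_adj hxw v
    rw [dist_eq_one_iff_adj.mpr huv] at hwv
    have hwy : w = y :=
      eq_of_adj_of_dist_add_one_eq hT.isAcyclic hxw hxy (r := v) (by omega) (by omega)
    subst hwy
    omega
  rw [T.dist_comm, dist_eq_one_iff_adj.mpr hxy] at hy
  exact ⟨rfl, hT.connected.dist_eq_zero_iff.mp (by omega)⟩

lemma dist_add_one_add_dist_le_length (hT : T.IsTree) (huv : T.Adj u v) (p : T.Walk x y)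
    (hx : x ∈ branch T u v) (hy : y ∈ branch T v u) :
    T.dist x u + 1 + T.dist v y ≤ p.length := by
  induction p with
  | nil =>
    rw [mem_branch_iff] at hx hy
    omega
  | @cons x z _ hxz p ih =>
    rw [Walk.length_cons]
    rcases mem_branch_or_mem_branch hT huv z with hz | hz
    · have := ih hz hy
      have := dist_le_dist_add_one_of_adj hxz u
      omega
    · obtain ⟨rfl, rfl⟩ := eq_of_adj_of_mem_branch hT huv hx hz hxz
      have := dist_le p
      rw [dist_self]
      omega

lemma dist_add_one_add_dist_le_dist (hT : T.IsTree) (huv : T.Adj u v)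
    (hx : x ∈ branch T u v) (hy : y ∈ branch T v u) :
    T.dist x u + 1 + T.dist v y ≤ T.dist x y := by
  obtain ⟨p, hp⟩ := hT.connected.exists_walk_length_eq_dist x y
  exact hp ▸ dist_add_one_add_dist_le_length hT huv p hx hy

lemma deg_eq_one_of_maximalFor_dist (hT : T.IsTree) (huv : T.Adj u v)
    (hl : MaximalFor (· ∈ branch T u v) (T.dist · v) l) : deg T l = 1 := by
  obtain ⟨q, hlq, hq⟩ :=
    exists_adj_dist_add_one_eq (hT.connected l v) (ne_right_of_mem_branch hl.prop)
  refine Set.ncard_eq_one.mpr ⟨q, Set.eq_singleton_iff_unique_mem.mpr ⟨hlq, fun m hlm => ?_⟩⟩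
  by_contra hmq
  have hm := dist_eq_dist_add_one_of_adj_of_ne hT hlq hlm (Ne.symm hmq) hq
  have hle : T.dist m v ≤ T.dist l v :=
    hl.le (mem_branch_of_adj hT huv hl.prop hlm hm)
  omega

lemma exists_adj_mem_branch_dist_eq (hT : T.IsTree) (huv : T.Adj u v) {p : V} (hl : deg T l = 1)
    (hlu : l ≠ u) (hlp : T.Adj l p) (hp : 3 ≤ deg T p) (hlB : l ∈ branch T u v) :
    ∃ m, m ≠ l ∧ T.Adj m p ∧ m ∈ branch T u v ∧ T.dist m v = T.dist l v := by
  obtain ⟨p', hlp', hpv⟩ :=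
    exists_adj_dist_add_one_eq (hT.connected l v) (ne_right_of_mem_branch hlB)
  obtain rfl := adj_unique_of_deg_eq_one hl hlp hlp'
  obtain ⟨p', hlp', hpu⟩ := exists_adj_dist_add_one_eq (hT.connected l u) hlu
  obtain rfl := adj_unique_of_deg_eq_one hl hlp hlp'
  have hpB : p ∈ branch T u v := by
    rw [mem_branch_iff] at hlB ⊢
    omega
  obtain ⟨q, hpq, hq⟩ :=
    exists_adj_dist_add_one_eq (hT.connected p v) (ne_right_of_mem_branch hpB)
  obtain ⟨m, hpm, hml, hmq⟩ := exists_mem_ne_ne_of_three_le_ncard hp l q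
  have hm := dist_eq_dist_add_one_of_adj_of_ne hT hpq hpm hmq.symm hq
  exact ⟨m, hml, hpm.symm, mem_branch_of_adj hT huv hpB hpm hm, hm.trans hpv⟩

-- A leaf of the branch furthest from `v` lies in `K`, or else it has a sibling that does.
lemma IsAmpleLeafSet.exists_mem_branch [Finite V] {K : Set V} (hK : IsAmpleLeafSet T K)
    (hT : T.IsTree) (huv : T.Adj u v) (hu : deg T u = 1 → u ∈ K) : ∃ l ∈ K, l ∈ branch T u v := by
  obtain ⟨l, hl⟩ := (Set.toFinite (branch T u v)).exists_maximalFor (T.dist · v) _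
    ⟨u, left_mem_branch huv⟩
  have hl_deg := deg_eq_one_of_maximalFor_dist hT huv hl
  by_cases hlK : l ∈ K
  · exact ⟨l, hlK, hl.prop⟩
  have hlu : l ≠ u := fun h => hlK (h ▸ hu (h ▸ hl_deg))
  obtain ⟨p, hlp⟩ := exists_adj_of_deg_eq_one hl_deg
  obtain ⟨m, hml, hmp, hm, hdist⟩ := exists_adj_mem_branch_dist_eq hT huv hl_deg hlu hlp
    (hK.three_le_deg hl_deg hlK hlp) hl.prop
  have hm_deg : deg T m = 1 := deg_eq_one_of_maximalFor_dist hT huv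
    ⟨hm, fun x hx _ => (hl.le hx).trans hdist.ge⟩
  refine ⟨m, ?_, hm⟩
  by_contra hmK
  exact hml (hK.eq_of_adj hm_deg hmK hl_deg hlK hmp hlp)

end Branch

/-! ### From ample sets to doubly resolving sets -/

/-- The edge `uv` of a tree separates the edge `e`, which touches `u`, from the edge `f`, which lies
on the side of `v`. The case `e = uv` is allowed, so that also edges with a common endpoint can be
separated. -/
structure Separates (T : SimpleGraph V) (u v : V) (e f : T.edgeSet) : Prop where
  adj : T.Adj u v
  left_mem : u ∈ e.1
  eq_or_mem_branch : ∀ w ∈ e.1, w = v ∨ w ∈ branch T u v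
  mem_branch : ∀ w ∈ f.1, w ∈ branch T v u

lemma Separates.lineGraph_dist_add_lt (hT : T.IsTree) {u v l k : V} {e f x y : T.edgeSet}
    (hsep : Separates T u v e f) (hl : deg T l = 1) (hlB : l ∈ branch T u v) (hlx : l ∈ x.1)
    (hk : deg T k = 1) (hkB : k ∈ branch T v u) (hky : k ∈ y.1) :
    T.lineGraph.dist e x + T.lineGraph.dist f y <
      T.lineGraph.dist f x + T.lineGraph.dist e y := by
  obtain ⟨c, hcf, hc⟩ := exists_mem_dist_le_lineGraph_dist hT.connected f hlx
  obtain ⟨w, hwe, hw⟩ := exists_mem_dist_le_lineGraph_dist hT.connected e hky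
  have hvw : T.dist v k ≤ T.dist w k := by
    rcases hsep.eq_or_mem_branch w hwe with rfl | hwB
    · rfl
    · have := dist_add_one_add_dist_le_dist hT hsep.adj hwB hkB
      omega
  calc T.lineGraph.dist e x + T.lineGraph.dist f y
      ≤ T.dist u l + T.dist c k :=
        add_le_add (lineGraph_dist_le_dist_of_deg_eq_one hT.connected hl hsep.left_mem hlx)
          (lineGraph_dist_le_dist_of_deg_eq_one hT.connected hk hcf hky)
    _ ≤ T.dist u l + (T.dist c v + T.dist v k) := by gcongr; exact hT.connected.dist_triangle
    _ < T.dist c v + 1 + T.dist u l + T.dist v k := by omega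
    _ ≤ T.dist c l + T.dist w k :=
        add_le_add
          (dist_add_one_add_dist_le_dist hT hsep.adj.symm (hsep.mem_branch c hcf) hlB) hvw
    _ ≤ T.lineGraph.dist f x + T.lineGraph.dist e y := add_le_add hc hw

lemma separates_of_adj_of_adj (hT : T.IsTree) {a b c : V} (hab : T.Adj a b) (hcb : T.Adj c b)
    (hac : a ≠ c) : Separates T a b ⟨s(a, b), hab⟩ ⟨s(c, b), hcb⟩ where
  adj := hab
  left_mem := Sym2.mem_mk_left a b
  eq_or_mem_branch w hw := by
    rcases Sym2.mem_iff.mp hw with rfl | rfl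
    · exact Or.inr (left_mem_branch hab)
    · exact Or.inl rfl
  mem_branch w hw := by
    rcases Sym2.mem_iff.mp hw with rfl | rfl
    · refine mem_branch_of_dist_le hT hab.symm ?_
      rw [dist_eq_one_iff_adj.mpr hcb]
      exact hT.connected.pos_dist_of_ne hac.symm
    · exact left_mem_branch hab.symm

lemma exists_mem_mem_dist_le (e f : G.edgeSet) :
    ∃ b ∈ e.1, ∃ d ∈ f.1, ∀ w ∈ e.1, ∀ z ∈ f.1, G.dist b d ≤ G.dist w z := by
  obtain ⟨⟨b, d⟩, ⟨hb, hd⟩, hmin⟩ := exists_minimalFor_of_wellFoundedLT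
    (fun p : V × V => p.1 ∈ e.1 ∧ p.2 ∈ f.1) (fun p => G.dist p.1 p.2)
    ⟨(e.1.out.1, f.1.out.1), e.1.out_fst_mem, f.1.out_fst_mem⟩
  exact ⟨b, hb, d, hd, fun w hw z hz => (le_total _ _).elim id (hmin (j := (w, z)) ⟨hw, hz⟩)⟩

-- Take for `uv` the first edge on a shortest path from `e` to `f`.
lemma exists_separates_of_disjoint (hT : T.IsTree) {e f : T.edgeSet}
    (hef : ∀ w ∈ e.1, w ∉ f.1) :
    ∃ u v, deg T u ≠ 1 ∧ Separates T u v e f := by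
  obtain ⟨b, hb, d, hd, hmin⟩ := exists_mem_mem_dist_le e f
  have hbd : b ≠ d := fun h => hef b hb (h ▸ hd)
  obtain ⟨v, hbv, hv⟩ := exists_adj_dist_add_one_eq (hT.connected b d) hbd
  have he (w : V) (hw : w ∈ e.1) : w ∈ branch T b v := by
    refine mem_branch_of_dist_le hT hbv ((dist_le_one_of_mem hw hb).trans ?_)
    refine hT.connected.pos_dist_of_ne ?_
    rintro rfl
    have := hmin w hw d hd
    omega
  have hf (w : V) (hw : w ∈ f.1) : w ∈ branch T v b := by
    refine mem_branch_of_dist_le hT hbv.symm ?_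
    calc T.dist w v ≤ T.dist w d + T.dist d v := hT.connected.dist_triangle
      _ ≤ 1 + T.dist d v := by gcongr; exact dist_le_one_of_mem hw hd
      _ = T.dist b d := by rw [T.dist_comm, add_comm, hv]
      _ ≤ T.dist b w := hmin b hb w hw
      _ = T.dist w b := T.dist_comm
  exact ⟨b, v, deg_ne_one_of_subset_branch hT.connected hbv he,
    hbv, hb, fun w hw => Or.inr (he w hw), hf⟩

lemma IsAmpleLeafSet.exists_separates {K : Set V} (hK : IsAmpleLeafSet T K) (hT : T.IsTree)
    {e f : T.edgeSet} (hef : e ≠ f) :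
    ∃ u v, (deg T u = 1 → u ∈ K) ∧ (Separates T u v e f ∨ Separates T u v f e) := by
  by_cases hdisj : ∀ w ∈ e.1, w ∉ f.1
  · obtain ⟨u, v, hu, hsep⟩ := exists_separates_of_disjoint hT hdisj
    exact ⟨u, v, fun h => absurd h hu, Or.inl hsep⟩
  push Not at hdisj
  obtain ⟨b, hbe, hbf⟩ := hdisj
  obtain ⟨a, hba, rfl⟩ := exists_adj_eq_mk_of_mem hbe
  obtain ⟨c, hbc, rfl⟩ := exists_adj_eq_mk_of_mem hbf
  have hac : a ≠ c := by
    rintro rfl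
    exact hef rfl
  simp only [Sym2.eq_swap (a := b)]
  by_cases ha : deg T a = 1 → a ∈ K
  · exact ⟨a, b, ha, Or.inl (separates_of_adj_of_adj hT hba.symm hbc.symm hac)⟩
  · refine ⟨c, b, fun hc => ?_, Or.inr (separates_of_adj_of_adj hT hbc.symm hba.symm hac.symm)⟩
    by_contra hcK
    push Not at ha
    exact hac (hK.eq_of_adj ha.1 ha.2 hc hcK hba.symm hbc.symm)

/-- The edges of `G` with an endpoint in `K`. -/
def incidentEdges (G : SimpleGraph V) (K : Set V) : Set G.edgeSet := {x | ∃ l ∈ K, l ∈ x.1}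

lemma ncard_incidentEdges_le {K : Set V} (hfin : K.Finite) (hK : ∀ l ∈ K, deg G l = 1) :
    (incidentEdges G K).ncard ≤ K.ncard := by
  refine ncard_le_ncard_of_forall_subsingleton (fun x l => l ∈ x.1) hfin (fun x hx => hx) ?_
  rintro l hl x ⟨-, hx⟩ y ⟨-, hy⟩
  exact edge_unique_of_deg_eq_one (hK l hl) hx hy

lemma exists_mem_incidentEdges {K : Set V} {l : V} (hlK : l ∈ K) (hl : deg G l = 1) :
    ∃ x ∈ incidentEdges G K, l ∈ x.1 := by
  obtain ⟨p, hlp⟩ := exists_adj_of_deg_eq_one hl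
  exact ⟨⟨s(l, p), hlp⟩, ⟨l, hlK, Sym2.mem_mk_left l p⟩, Sym2.mem_mk_left l p⟩

lemma IsAmpleLeafSet.exists_lineGraph_dist_add_lt [Finite V] {K : Set V} (hK : IsAmpleLeafSet T K)
    (hT : T.IsTree) {u v : V} {e f : T.edgeSet} (hu : deg T u = 1 → u ∈ K)
    (hsep : Separates T u v e f) : ∃ x ∈ incidentEdges T K, ∃ y ∈ incidentEdges T K,
      T.lineGraph.dist e x + T.lineGraph.dist f y <
        T.lineGraph.dist f x + T.lineGraph.dist e y := by
  have hv : deg T v ≠ 1 :=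
    deg_ne_one_of_subset_branch hT.connected hsep.adj.symm hsep.mem_branch
  obtain ⟨l, hlK, hlB⟩ := hK.exists_mem_branch hT hsep.adj hu
  obtain ⟨k, hkK, hkB⟩ := hK.exists_mem_branch hT hsep.adj.symm fun h => absurd h hv
  obtain ⟨x, hx, hlx⟩ := exists_mem_incidentEdges hlK (hK.deg_eq_one hlK)
  obtain ⟨y, hy, hky⟩ := exists_mem_incidentEdges hkK (hK.deg_eq_one hkK)
  exact ⟨x, hx, y, hy, hsep.lineGraph_dist_add_lt hT (hK.deg_eq_one hlK) hlB hlx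
    (hK.deg_eq_one hkK) hkB hky⟩

lemma IsAmpleLeafSet.isDoublyResolvingSet_incidentEdges [Finite V] {K : Set V}
    (hK : IsAmpleLeafSet T K) (hT : T.IsTree) :
    IsDoublyResolvingSet T.lineGraph (incidentEdges T K) := by
  intro e f hef
  obtain ⟨u, v, hu, hsep | hsep⟩ := hK.exists_separates hT hef <;>
  · obtain ⟨x, hx, y, hy, hlt⟩ := hK.exists_lineGraph_dist_add_lt hT hu hsep
    exact ⟨x, hx, y, hy, by omega⟩

/-- For a tree `T` with at least three vertices,
`Ψ(L(T)) = σ(T) - ex'(T)`, where `σ(T)` is the number of leaves of `T` and `ex'(T)`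
is the number of strong exterior major vertices of `T` (major vertices, i.e., vertices of
degree at least 3, adjacent to at least one leaf). -/
theorem psi_lineGraph_tree {V : Type*} [Fintype V] (T : SimpleGraph V)
    (hT : T.IsTree) (hcard : 3 ≤ Fintype.card V) :
    psi T.lineGraph =
      {v : V | deg T v = 1}.ncard -
        {v : V | 3 ≤ deg T v ∧ ∃ w, T.Adj v w ∧ deg T w = 1}.ncard := by
  have hcard' : 3 ≤ ENat.card V := by
    rw [ENat.card_eq_coe_fintype_card]
    exact_mod_cast hcard
  obtain ⟨K, hK, hK_card⟩ := exists_isAmpleLeafSet_ncard_eq T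
  have hDRS := hK.isDoublyResolvingSet_incidentEdges hT
  apply le_antisymm
  · calc psi T.lineGraph ≤ (incidentEdges T K).ncard := Nat.sInf_le ⟨_, hDRS, rfl⟩
      _ ≤ K.ncard := ncard_incidentEdges_le K.toFinite hK.deg_eq_one
      _ = _ := hK_card
  · refine le_csInf ⟨_, _, hDRS, rfl⟩ ?_
    rintro _ ⟨S, hS, rfl⟩
    calc _ ≤ (incidentLeaves T S).ncard :=
          (isAmpleLeafSet_incidentLeaves hT.connected hcard' hS).ncard_sub_ncard_le
      _ ≤ S.ncard := ncard_incidentLeaves_le hT.connected hcard' S.toFinite
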